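/- arXiv:2512.16283 — 2 statements merged into one kernel-verified Lean document; each statement's English description precedes it below -/
import Mathlib

section
/- Let σ > 2, r ∈ (0,1), and 0 < ρ ≤ r/2. Let (I_n)_{n∈ℤ} be real numbers with 0 ≤ I_n ≤ exp(−2r·ln^σ⌊n⌋) for all n. Then the sum, over all finitely supported a : ℤ → ℕ, of Π_{n∈ℤ} ( exp(2ρ·ln^σ⌊n⌋)·I_n )^{a_n} is at most exp( (18/r)·exp( (4/r)^{1/(σ−1)} ) ). -/
/-- `ln^σ⌊n⌋` for an integer `n`, where `⌊n⌋ = max{c, |n|}`. -/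
noncomputable def lnZ (c σ : ℝ) (n : ℤ) : ℝ := Real.log (max c |(n : ℝ)|) ^ σ

/-!
Put `xₙ = exp (2ρ ln^σ⌊n⌋) Iₙ ≤ exp (-r ln^σ⌊n⌋) ≤ exp (-r) < 1`. Every finite part of the sum is
dominated by a finite product of geometric sums, each at most
`1 / (1 - xₙ) ≤ exp (xₙ / (1 - exp (-r)))`, so it remains to bound `∑ xₙ`. Half of the decay of `xₙ`
is spent on the singular factor, since `exp (-r/2) / (1 - exp (-r)) = 1 / (2 sinh (r/2)) ≤ 1 / r`.
The numbers `exp (r/2) xₙ` that remain are at most `1`, and at most `1 / n²` once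
`|n| ≥ M = exp ((4/r)^(1/(σ-1)))`, because there `r ln^σ|n| ≥ 4 ln|n|`; their sum is `O(M)`.
-/

section FinsuppProducts

variable {ι : Type*}

lemma sum_finsupp_prod_eq_prod_sum {α R : Type*} [Zero α] [CommSemiring R] {f : ι → α → R}
    (hf : ∀ i, f i 0 = 1) (s : Finset ι) (t : ι → Finset α) :
    ∑ a ∈ s.finsupp t, a.prod f = ∏ i ∈ s, ∑ k ∈ t i, f i k := by
  classical
  rw [Finset.prod_sum, Finset.finsupp, Finset.sum_map]
  refine Finset.sum_congr rfl fun p _ => ?_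
  rw [Function.Embedding.coeFn_mk,
    Finsupp.prod_of_support_subset _ (Finsupp.support_indicator_subset s p) _ fun i _ => hf i,
    ← Finset.prod_attach]
  exact Finset.prod_congr rfl fun i _ => by rw [Finsupp.indicator_of_mem i.2]

lemma subset_finsupp_range_sup (S : Finset (ι →₀ ℕ)) :
    S ⊆ (S.sup id).support.finsupp fun i => Finset.range (S.sup id i + 1) := by
  intro a ha
  have ha_le : a ≤ S.sup id := Finset.le_sup (f := id) ha
  exact Finset.mem_finsupp_iff.mpr
    ⟨Finsupp.support_mono ha_le, fun i _ => Finset.mem_range_succ_iff.mpr (ha_le i)⟩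

lemma one_sub_inv_le_exp_div {x q : ℝ} (hx : 0 ≤ x) (hxq : x ≤ q) (hq : q < 1) :
    (1 - x)⁻¹ ≤ Real.exp (x / (1 - q)) :=
  calc (1 - x)⁻¹ = x / (1 - x) + 1 := by
        have : 1 - x ≠ 0 := by linarith
        field_simp
        exact (add_sub_cancel x 1).symm
    _ ≤ x / (1 - q) + 1 := by gcongr
    _ ≤ Real.exp (x / (1 - q)) := Real.add_one_le_exp _

variable {x : ι → ℝ} {q : ℝ}

lemma sum_finsupp_prod_pow_le (hx : ∀ i, 0 ≤ x i) (hxq : ∀ i, x i ≤ q) (hq : q < 1)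
    (hsum : Summable x) (S : Finset (ι →₀ ℕ)) :
    ∑ a ∈ S, a.prod (fun i k => x i ^ k) ≤ Real.exp ((∑' i, x i) / (1 - q)) := by
  set b := S.sup id
  have hgeom (i : ι) (N : ℕ) : ∑ k ∈ Finset.range N, x i ^ k ≤ Real.exp (x i / (1 - q)) := by
    have hlt : x i < 1 := (hxq i).trans_lt hq
    calc ∑ k ∈ Finset.range N, x i ^ k ≤ ∑' k, x i ^ k :=
          (summable_geometric_of_lt_one (hx i) hlt).sum_le_tsum _ fun k _ => pow_nonneg (hx i) k
      _ = (1 - x i)⁻¹ := tsum_geometric_of_lt_one (hx i) hlt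
      _ ≤ Real.exp (x i / (1 - q)) := one_sub_inv_le_exp_div (hx i) (hxq i) hq
  calc ∑ a ∈ S, a.prod (fun i k => x i ^ k)
      ≤ ∑ a ∈ b.support.finsupp fun i => Finset.range (b i + 1), a.prod fun i k => x i ^ k :=
        Finset.sum_le_sum_of_subset_of_nonneg (subset_finsupp_range_sup S) fun a _ _ =>
          Finset.prod_nonneg fun i _ => pow_nonneg (hx i) _
    _ = ∏ i ∈ b.support, ∑ k ∈ Finset.range (b i + 1), x i ^ k :=
        sum_finsupp_prod_eq_prod_sum (fun i => pow_zero (x i)) _ _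
    _ ≤ ∏ i ∈ b.support, Real.exp (x i / (1 - q)) :=
        Finset.prod_le_prod (fun i _ => Finset.sum_nonneg fun k _ => pow_nonneg (hx i) k)
          fun i _ => hgeom i _
    _ = Real.exp ((∑ i ∈ b.support, x i) / (1 - q)) := by rw [← Real.exp_sum, Finset.sum_div]
    _ ≤ Real.exp ((∑' i, x i) / (1 - q)) := by
        have : 0 ≤ 1 - q := by linarith
        gcongr
        exact hsum.sum_le_tsum _ fun i _ => hx i

lemma summable_finsupp_prod_pow (hx : ∀ i, 0 ≤ x i) (hxq : ∀ i, x i ≤ q) (hq : q < 1)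
    (hsum : Summable x) : Summable fun a : ι →₀ ℕ => a.prod fun i k => x i ^ k :=
  summable_of_sum_le (fun _ => Finset.prod_nonneg fun i _ => pow_nonneg (hx i) _)
    (sum_finsupp_prod_pow_le hx hxq hq hsum)

lemma tsum_finsupp_prod_pow_le (hx : ∀ i, 0 ≤ x i) (hxq : ∀ i, x i ≤ q) (hq : q < 1)
    (hsum : Summable x) :
    ∑' a : ι →₀ ℕ, a.prod (fun i k => x i ^ k) ≤ Real.exp ((∑' i, x i) / (1 - q)) :=
  Real.tsum_le_of_sum_le (fun _ => Finset.prod_nonneg fun i _ => pow_nonneg (hx i) _)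
    (sum_finsupp_prod_pow_le hx hxq hq hsum)

end FinsuppProducts

section IntegerSums

lemma hasSum_int_one_div_sq : HasSum (fun n : ℤ => 1 / (n : ℝ) ^ 2) (Real.pi ^ 2 / 3) := by
  have hzeta := HasSum.of_nat_of_neg (f := fun n : ℤ => 1 / (n : ℝ) ^ 2)
    (by simpa using hasSum_zeta_two) (by simpa using hasSum_zeta_two)
  have hvalue : Real.pi ^ 2 / 6 + Real.pi ^ 2 / 6 - 1 / ((0 : ℤ) : ℝ) ^ 2 = Real.pi ^ 2 / 3 := by
    rw [Int.cast_zero, zero_pow two_ne_zero, div_zero]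
    ring
  rwa [hvalue] at hzeta

lemma card_Icc_neg_floor_le {M : ℝ} (hM : 0 ≤ M) :
    ((Finset.Icc (-⌊M⌋) ⌊M⌋).card : ℝ) ≤ 2 * M + 1 := by
  have hcard : ((Finset.Icc (-⌊M⌋) ⌊M⌋).card : ℤ) = 2 * ⌊M⌋ + 1 := by
    have := Int.floor_nonneg.mpr hM
    rw [Int.card_Icc]
    lia
  have hcard_real : ((Finset.Icc (-⌊M⌋) ⌊M⌋).card : ℝ) = 2 * ⌊M⌋ + 1 := mod_cast hcard
  linarith [Int.floor_le M]

lemma summable_and_tsum_int_le_of_le_one_div_sq {x : ℤ → ℝ} {M : ℝ} (hM : 0 ≤ M)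
    (hx : ∀ n, 0 ≤ x n) (hx_one : ∀ n, x n ≤ 1)
    (hx_sq : ∀ n : ℤ, M ≤ |(n : ℝ)| → x n ≤ 1 / (n : ℝ) ^ 2) :
    Summable x ∧ ∑' n, x n ≤ 2 * M + 5 := by
  set s := Finset.Icc (-⌊M⌋) ⌊M⌋
  have hmajorant : HasSum (fun n : ℤ => (s : Set ℤ).indicator 1 n + 1 / (n : ℝ) ^ 2)
      (s.card + Real.pi ^ 2 / 3) := by
    refine HasSum.add ?_ hasSum_int_one_div_sq
    simpa [Finset.sum_indicator_subset] using
      hasSum_sum_of_ne_finset_zero (f := (s : Set ℤ).indicator (1 : ℤ → ℝ)) (s := s)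
        fun n hn => Set.indicator_of_notMem (mod_cast hn) _
  have hle (n : ℤ) : x n ≤ (s : Set ℤ).indicator 1 n + 1 / (n : ℝ) ^ 2 := by
    by_cases hn : n ∈ s
    · rw [Set.indicator_of_mem (mod_cast hn), Pi.one_apply]
      exact (hx_one n).trans (le_add_of_nonneg_right (by positivity))
    · rw [Set.indicator_of_notMem (mod_cast hn), zero_add]
      refine hx_sq n (le_of_not_gt fun hlt => hn ?_)
      have habs := abs_lt.mp hlt
      exact Finset.mem_Icc.mpr
        ⟨neg_le.mp (Int.le_floor.mpr (by push_cast; linarith)), Int.le_floor.mpr habs.2.le⟩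
  have hsum : Summable x := hmajorant.summable.of_nonneg_of_le hx hle
  refine ⟨hsum, ?_⟩
  have hpi : Real.pi ^ 2 ≤ 12 := by nlinarith [Real.pi_lt_d2, Real.pi_pos]
  calc ∑' n, x n ≤ s.card + Real.pi ^ 2 / 3 := hasSum_le hle hsum.hasSum hmajorant
    _ ≤ 2 * M + 5 := by linarith [card_Icc_neg_floor_le hM]

end IntegerSums

section LogWeights

lemma mul_le_rpow_of_rpow_one_div_le {k t σ : ℝ} (hσ : 1 < σ) (hk : 0 ≤ k)
    (ht : k ^ (1 / (σ - 1)) ≤ t) : k * t ≤ t ^ σ := by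
  have ht0 : 0 ≤ t := (Real.rpow_nonneg hk _).trans ht
  calc k * t ≤ t ^ (σ - 1) * t := by
        gcongr
        rwa [← Real.rpow_inv_le_iff_of_pos hk ht0 (by linarith), ← one_div]
    _ = t ^ σ := by rw [← Real.rpow_add_one' ht0 (by linarith), sub_add_cancel]

variable {c σ r : ℝ}

lemma one_le_lnZ (hc : Real.exp 1 ≤ c) (hσ : 0 ≤ σ) (n : ℤ) : 1 ≤ lnZ c σ n := by
  have hexp : Real.exp 1 ≤ max c |(n : ℝ)| := hc.trans (le_max_left _ _)
  exact Real.one_le_rpow ((Real.le_log_iff_exp_le ((Real.exp_pos 1).trans_le hexp)).mpr hexp) hσ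

lemma log_abs_rpow_le_lnZ (hσ : 0 ≤ σ) {n : ℤ} (hn : 1 ≤ |(n : ℝ)|) :
    Real.log |(n : ℝ)| ^ σ ≤ lnZ c σ n :=
  Real.rpow_le_rpow (Real.log_nonneg hn)
    (Real.log_le_log (zero_lt_one.trans_le hn) (le_max_right _ _)) hσ

lemma mul_log_abs_le_lnZ {k : ℝ} (hσ : 1 < σ) (hk : 0 ≤ k) {n : ℤ}
    (hn : Real.exp (k ^ (1 / (σ - 1))) ≤ |(n : ℝ)|) : k * Real.log |(n : ℝ)| ≤ lnZ c σ n := by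
  have hn0 : 0 < |(n : ℝ)| := (Real.exp_pos _).trans_le hn
  have hn1 : 1 ≤ |(n : ℝ)| := (Real.one_le_exp (by positivity)).trans hn
  calc k * Real.log |(n : ℝ)| ≤ Real.log |(n : ℝ)| ^ σ :=
        mul_le_rpow_of_rpow_one_div_le hσ hk ((Real.le_log_iff_exp_le hn0).mpr hn)
    _ ≤ lnZ c σ n := log_abs_rpow_le_lnZ (by linarith) hn1

lemma exp_half_sub_mul_lnZ_le_one (hc : Real.exp 1 ≤ c) (hσ : 0 ≤ σ) (hr : 0 ≤ r) (n : ℤ) :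
    Real.exp (r / 2 - r * lnZ c σ n) ≤ 1 :=
  Real.exp_le_one_iff.mpr (by nlinarith [one_le_lnZ hc hσ n])

lemma exp_half_sub_mul_lnZ_le_one_div_sq (hc : Real.exp 1 ≤ c) (hσ : 1 < σ) (hr : 0 < r) {n : ℤ}
    (hn : Real.exp ((4 / r) ^ (1 / (σ - 1))) ≤ |(n : ℝ)|) :
    Real.exp (r / 2 - r * lnZ c σ n) ≤ 1 / (n : ℝ) ^ 2 := by
  have hlog : 4 * Real.log |(n : ℝ)| ≤ r * lnZ c σ n := by
    rw [← div_le_iff₀' hr, ← div_mul_eq_mul_div]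
    exact mul_log_abs_le_lnZ hσ (by positivity) hn
  have hone : r ≤ r * lnZ c σ n := le_mul_of_one_le_right hr.le (one_le_lnZ hc (by linarith) n)
  calc Real.exp (r / 2 - r * lnZ c σ n) ≤ Real.exp (-(2 * Real.log |(n : ℝ)|)) :=
        Real.exp_le_exp.mpr (by linarith)
    _ = 1 / (n : ℝ) ^ 2 := by
        rw [Real.exp_neg, two_mul, Real.exp_add, Real.exp_log ((Real.exp_pos _).trans_le hn),
          abs_mul_abs_self, ← sq, one_div]

lemma summable_and_tsum_le_of_le_exp_neg_mul_lnZ (hc : Real.exp 1 ≤ c) (hσ : 1 < σ) (hr : 0 < r)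
    {x : ℤ → ℝ} (hx : ∀ n, 0 ≤ x n) (hx_exp : ∀ n, x n ≤ Real.exp (-(r * lnZ c σ n))) :
    Summable x ∧
      ∑' n, x n ≤ Real.exp (-(r / 2)) * (7 * Real.exp ((4 / r) ^ (1 / (σ - 1)))) := by
  set M := Real.exp ((4 / r) ^ (1 / (σ - 1)))
  have hM : 1 ≤ M := Real.one_le_exp (by positivity)
  have hscaled (n : ℤ) : Real.exp (r / 2) * x n ≤ Real.exp (r / 2 - r * lnZ c σ n) := by
    rw [sub_eq_add_neg, Real.exp_add]
    gcongr
    exact hx_exp n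
  obtain ⟨hsum, hle⟩ := summable_and_tsum_int_le_of_le_one_div_sq (zero_le_one.trans hM)
    (fun n => mul_nonneg (Real.exp_pos _).le (hx n))
    (fun n => (hscaled n).trans (exp_half_sub_mul_lnZ_le_one hc (by linarith) hr.le n))
    (fun n hn => (hscaled n).trans (exp_half_sub_mul_lnZ_le_one_div_sq hc hσ hr hn))
  refine ⟨(summable_mul_left_iff (Real.exp_ne_zero _)).mp hsum, ?_⟩
  rw [tsum_mul_left] at hle
  rw [Real.exp_neg, inv_mul_eq_div, le_div_iff₀' (Real.exp_pos _)]
  linarith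

end LogWeights

lemma exp_neg_half_div_one_sub_exp_neg_le {r : ℝ} (hr : 0 < r) :
    Real.exp (-(r / 2)) / (1 - Real.exp (-r)) ≤ 1 / r := by
  have hsinh : r / 2 ≤ Real.sinh (r / 2) := Real.self_le_sinh_iff.mpr (by positivity)
  have hfactor : 1 - Real.exp (-r) = Real.exp (-(r / 2)) * (2 * Real.sinh (r / 2)) := by
    rw [Real.sinh_eq, mul_div_cancel₀ _ two_ne_zero, mul_sub, ← Real.exp_add, ← Real.exp_add,
      neg_add_cancel, Real.exp_zero, ← neg_add, add_halves]
  rw [hfactor, div_mul_cancel_left₀ (Real.exp_ne_zero _), ← one_div]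
  exact one_div_le_one_div_of_le hr (by linarith)

lemma exp_mul_le_exp_neg {r ρ L y : ℝ} (hL : 0 ≤ L) (hρr : ρ ≤ r / 2)
    (hy : y ≤ Real.exp (-(2 * r) * L)) : Real.exp (2 * ρ * L) * y ≤ Real.exp (-(r * L)) :=
  calc Real.exp (2 * ρ * L) * y ≤ Real.exp (2 * ρ * L) * Real.exp (-(2 * r) * L) := by gcongr
    _ = Real.exp (2 * (ρ - r) * L) := by rw [← Real.exp_add]; ring_nf
    _ ≤ Real.exp (-r * L) := by gcongr; linarith
    _ = Real.exp (-(r * L)) := by rw [neg_mul]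

theorem full_dim_KAM_stmt14_general {σ r ρ c : ℝ} (hσ : 1 < σ) (hr : 0 < r) (hρr : ρ ≤ r / 2)
    (hc : Real.exp 1 ≤ c) {I : ℤ → ℝ}
    (hI : ∀ n, 0 ≤ I n ∧ I n ≤ Real.exp (-(2 * r) * lnZ c σ n)) :
    Summable (fun a : ℤ →₀ ℕ =>
        ∏ n ∈ a.support, (Real.exp (2 * ρ * lnZ c σ n) * I n) ^ (a n)) ∧
    ∑' a : ℤ →₀ ℕ, ∏ n ∈ a.support, (Real.exp (2 * ρ * lnZ c σ n) * I n) ^ (a n)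
      ≤ Real.exp ((7 / r) * Real.exp ((4 / r) ^ (1 / (σ - 1)))) := by
  set M := Real.exp ((4 / r) ^ (1 / (σ - 1)))
  have hL (n : ℤ) : 1 ≤ lnZ c σ n := one_le_lnZ hc (by linarith) n
  have hx (n : ℤ) : 0 ≤ Real.exp (2 * ρ * lnZ c σ n) * I n :=
    mul_nonneg (Real.exp_pos _).le (hI n).1
  have hx_decay (n : ℤ) :
      Real.exp (2 * ρ * lnZ c σ n) * I n ≤ Real.exp (-(r * lnZ c σ n)) :=
    exp_mul_le_exp_neg (zero_le_one.trans (hL n)) hρr (hI n).2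
  have hxq (n : ℤ) : Real.exp (2 * ρ * lnZ c σ n) * I n ≤ Real.exp (-r) :=
    (hx_decay n).trans (Real.exp_le_exp.mpr (neg_le_neg (le_mul_of_one_le_right hr.le (hL n))))
  have hq : Real.exp (-r) < 1 := Real.exp_lt_one_iff.mpr (neg_neg_of_pos hr)
  obtain ⟨hsum, hle⟩ := summable_and_tsum_le_of_le_exp_neg_mul_lnZ hc hσ hr hx hx_decay
  refine ⟨summable_finsupp_prod_pow hx hxq hq hsum,
    (tsum_finsupp_prod_pow_le hx hxq hq hsum).trans (Real.exp_le_exp.mpr ?_)⟩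
  calc (∑' n, Real.exp (2 * ρ * lnZ c σ n) * I n) / (1 - Real.exp (-r))
      ≤ Real.exp (-(r / 2)) * (7 * M) / (1 - Real.exp (-r)) := by gcongr
    _ = Real.exp (-(r / 2)) / (1 - Real.exp (-r)) * (7 * M) := mul_div_right_comm _ _ _
    _ ≤ 1 / r * (7 * M) :=
        mul_le_mul_of_nonneg_right (exp_neg_half_div_one_sub_exp_neg_le hr) (by positivity)
    _ = 7 / r * M := by ring

/-- the frequency-shift bound (114) in the iterative Lemma 4.1 of the paper.
If `0 ≤ Iₙ ≤ exp(−2r·ln^σ⌊n⌋)` for all `n`, `0 < ρ ≤ r/2` and `r ∈ (0,1)`, then the sum over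
all finitely supported `a : ℤ → ℕ` of `∏ₙ (exp(2ρ·ln^σ⌊n⌋)·Iₙ)^{aₙ}` converges and is at most
`exp((18/r)·exp((4/r)^{1/(σ−1)}))`. -/
theorem full_dim_KAM_stmt14 (σ r ρ : ℝ) (hσ : 2 < σ) (hr : r ∈ Set.Ioo (0 : ℝ) 1)
    (hρ : 0 < ρ) (hρr : ρ ≤ r / 2)
    (c : ℝ) (hc : Real.exp 1 ≤ c)
    (hsub : ∀ x y : ℝ, c ≤ y → y ≤ x →
      Real.log (x + y) ^ σ ≤ Real.log x ^ σ + (1 / 2) * Real.log y ^ σ)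
    (I : ℤ → ℝ) (hI : ∀ n, 0 ≤ I n ∧ I n ≤ Real.exp (-(2 * r) * lnZ c σ n)) :
    Summable (fun a : ℤ →₀ ℕ =>
        ∏ n ∈ a.support, (Real.exp (2 * ρ * lnZ c σ n) * I n) ^ (a n)) ∧
    ∑' a : ℤ →₀ ℕ, ∏ n ∈ a.support, (Real.exp (2 * ρ * lnZ c σ n) * I n) ^ (a n)
      ≤ Real.exp ((18 / r) * Real.exp ((4 / r) ^ (1 / (σ - 1)))) := by
  have hr0 := hr.1
  exact (full_dim_KAM_stmt14_general (by linarith) hr0 hρr hc hI).imp_right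
    fun h => h.trans (by gcongr; norm_num)
end

section
/- Let σ > 2 and let μ > r > 5ρ > 0. Then there exists a constant C = C(r, ρ, μ, σ) > 0 such that for every j ∈ ℤ the following holds: the sum, over all finitely supported a, k, k' : ℤ → ℕ with k_j ≥ 1, of k_j · exp( ρ·( Σ_{n∈ℤ}(2a_n + k_n + k'_n)·ln^σ⌊n⌋ − 2·ln^σ⌊n₁*⌋ ) − μ·ln^σ⌊m*(k,k')⌋ − r·( Σ_{n∈ℤ}(2a_n + k_n + k'_n)·ln^σ⌊n⌋ − 2·ln^σ⌊j⌋ ) ) is at most C, where n₁* denotes the largest element of the finite multiset in which each |n| (n ∈ ℤ) is repeated 2a_n + k_n + k'_n times. -/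
/-- `ln^σ⌊m⌋` for a natural number `m`, where `⌊m⌋ = max{c, m}`. -/
noncomputable def lnN (c σ : ℝ) (m : ℕ) : ℝ := Real.log (max c (m : ℝ)) ^ σ

/-- The finite multiset in which each `|n|` (`n ∈ ℤ`) is repeated `2aₙ + kₙ + k'ₙ` times. -/
def reps (a k k' : ℤ →₀ ℕ) : Multiset ℕ :=
  (a.support ∪ k.support ∪ k'.support).val.bind
    (fun n => Multiset.replicate (2 * a n + k n + k' n) n.natAbs)

/-- The decreasing rearrangement of a finite multiset of naturals; its head is `n₁*`. -/
def descList (M : Multiset ℕ) : List ℕ := (M.sort (· ≤ ·)).reverse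

/-- The momentum `m(k,k') = ∑ₙ (kₙ - k'ₙ)·n` of finitely supported `k, k' : ℤ → ℕ`. -/
def momentum (k k' : ℤ →₀ ℕ) : ℤ :=
  ∑ n ∈ k.support ∪ k'.support, ((k n : ℤ) - (k' n : ℤ)) * n

/-- `∑ₙ (2aₙ + kₙ + k'ₙ)·ln^σ⌊n⌋`. -/
noncomputable def bigSum (c σ : ℝ) (a k k' : ℤ →₀ ℕ) : ℝ :=
  ∑ n ∈ a.support ∪ k.support ∪ k'.support, ((2 * a n + k n + k' n : ℕ) : ℝ) * lnZ c σ n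

/-- The summand of Lemma 2.4 of the paper:
`kⱼ·exp( ρ·(∑ₙ(2aₙ+kₙ+k'ₙ)ln^σ⌊n⌋ − 2ln^σ⌊n₁*⌋) − μ·ln^σ⌊m*(k,k')⌋
        − r·(∑ₙ(2aₙ+kₙ+k'ₙ)ln^σ⌊n⌋ − 2ln^σ⌊j⌋) )`. -/
noncomputable def vectorFieldTerm (c σ ρ μ r : ℝ) (j : ℤ)
    (t : (ℤ →₀ ℕ) × (ℤ →₀ ℕ) × (ℤ →₀ ℕ)) : ℝ :=
  (t.2.1 j : ℝ) *
    Real.exp (ρ * (bigSum c σ t.1 t.2.1 t.2.2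
          - 2 * lnN c σ (descList (reps t.1 t.2.1 t.2.2)).headI)
      - μ * lnN c σ (momentum t.2.1 t.2.2).natAbs
      - r * (bigSum c σ t.1 t.2.1 t.2.2 - 2 * lnZ c σ j))

/-!
Write `g = ln^σ⌊·⌋`. Remove one particle at `j` from `k`, and let `E` and `m` be the total weight
and the momentum of what is left. Since `n₁* ≥ |j|`, the summand is at most `1 + kⱼ` times the
exponential of `-α (E - g j) - μ g (m + j)`, where `α = r - ρ`. Adding the smaller of two numbers
to the larger costs only half its weight, so if `n` is the largest remaining mode, then
`g j ≤ g (m + j) + (E + g n) / 2`, and the exponent is at most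
`-(α / 2) (E - g n) - (μ - α) g (m + j)`.

The first term does not see the particle at `n`, over which one has to sum separately. If it
belongs to `a`, its multiplicity is two and `E - g n` still contains `g n`. If it belongs to `k` or
`k'`, then `m + j` determines `n` once the other particles are fixed, so the sum over `n` is a sum
over `m + j`, which does not depend on `j` because `ℤ` is invariant under shifts. The factor
`1 + kⱼ` is absorbed by the exponential, and the sum of `exp (-δ E)` over all configurations is a
product of geometric series, convergent because `∑ₙ exp (-δ g n) < ∞`.
-/

open Filter

section PartitionFunction

variable {ι : Type*}

theorem summable_div_one_sub_of_nonneg {x : ι → ℝ} (hx : ∀ i, 0 ≤ x i) (hsum : Summable x) :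
    Summable fun i => x i / (1 - x i) := by
  refine Summable.of_norm_bounded_eventually (hsum.mul_left 2) ?_
  filter_upwards [hsum.tendsto_cofinite_zero.eventually_le_const one_half_pos] with i hi
  have hi' : 0 < 1 - x i := by linarith
  rw [Real.norm_of_nonneg (div_nonneg (hx i) hi'.le), div_le_iff₀ hi']
  nlinarith [hx i]

theorem hasSum_pow_of_ne_zero {x : ℝ} (h0 : 0 ≤ x) (h1 : x < 1) :
    HasSum (fun m : ℕ => if m = 0 then 0 else x ^ m) (x / (1 - x)) := by
  rw [← hasSum_nat_add_iff' 1]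
  simpa [pow_succ', div_eq_mul_inv] using (hasSum_geometric_of_lt_one h0 h1).mul_left x

-- A finitely supported multiplicity function is determined by its graph, so the sum is dominated
-- by a sum of finite products of the `x i ^ m` with `m ≠ 0`.
theorem summable_finsupp_prod_pow_s15 {x : ι → ℝ} (h0 : ∀ i, 0 ≤ x i) (h1 : ∀ i, x i < 1)
    (hsum : Summable x) : Summable fun v : ι →₀ ℕ => v.prod fun i m => x i ^ m := by
  let f : ι × ℕ → ℝ := fun p => if p.2 = 0 then 0 else x p.1 ^ p.2
  have hf : ∀ p, 0 ≤ f p := fun p => ite_nonneg le_rfl (pow_nonneg (h0 _) _)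
  have hfib (i : ι) : HasSum (fun m => f (i, m)) (x i / (1 - x i)) :=
    hasSum_pow_of_ne_zero (h0 i) (h1 i)
  have hfsum : Summable f := (summable_prod_of_nonneg hf).2
    ⟨fun i => (hfib i).summable, by
      simpa only [(hfib _).tsum_eq] using summable_div_one_sub_of_nonneg h0 hsum⟩
  refine ((summable_finsetProd_of_summable_nonneg hf hfsum).comp_injective
    (Finsupp.graph_injective ι ℕ)).congr fun v => ?_
  rw [Function.comp_apply, Finsupp.graph, Finset.prod_map, Finsupp.prod]
  refine Finset.prod_congr rfl fun i hi => ?_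
  exact if_neg (Finsupp.mem_support_iff.1 hi)

theorem exp_neg_weight (w : ι → ℝ) (v : ι →₀ ℕ) :
    Real.exp (-Finsupp.weight w v) = v.prod fun i m => Real.exp (-w i) ^ m := by
  simp only [Finsupp.weight_apply, Finsupp.sum, Finsupp.prod, ← Finset.sum_neg_distrib,
    Real.exp_sum, ← Real.exp_nat_mul, nsmul_eq_mul, mul_neg]

theorem summable_exp_neg_weight {w : ι → ℝ} (hw : ∀ i, 0 < w i)
    (hsum : Summable fun i => Real.exp (-w i)) :
    Summable fun v : ι →₀ ℕ => Real.exp (-Finsupp.weight w v) := by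
  simp only [exp_neg_weight]
  exact summable_finsupp_prod_pow_s15 (fun i => (Real.exp_pos _).le)
    (fun i => Real.exp_lt_one_iff.2 (neg_lt_zero.2 (hw i))) hsum

end PartitionFunction

section Tsum

theorem tsum_le_tsum_of_forall_exists {α β : Type*} {f : α → ENNReal} {g : β → ENNReal}
    (ψ : β → α) (h : ∀ a, ∃ b, ψ b = a ∧ f a ≤ g b) : ∑' a, f a ≤ ∑' b, g b := by
  choose φ hφ hle using h
  exact (ENNReal.tsum_le_tsum hle).trans
    (ENNReal.tsum_comp_le_tsum_of_injective (Function.LeftInverse.injective hφ) g)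

theorem tsum_le_zero_add_tsum_add {M ι : Type*} [Add M] [Zero M] (e : ι → M)
    {f : M → ENNReal} {F : M → ι → ENNReal}
    (h : ∀ v ≠ 0, ∃ u i, u + e i = v ∧ f v ≤ F u i) :
    ∑' v, f v ≤ f 0 + ∑' u, ∑' i, F u i := by
  rw [← ENNReal.tsum_prod]
  let g : Unit ⊕ M × ι → ENNReal := Sum.elim (fun _ => f 0) fun p => F p.1 p.2
  have hg : ∑' s, g s = f 0 + ∑' p : M × ι, F p.1 p.2 := by
    rw [ENNReal.summable.tsum_sum ENNReal.summable, tsum_fintype]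
    simp [g]
  rw [← hg]
  refine tsum_le_tsum_of_forall_exists (Sum.elim (fun _ => 0) fun p => p.1 + e p.2) ?_
  intro v
  rcases eq_or_ne v 0 with rfl | hv
  · exact ⟨.inl (), rfl, le_rfl⟩
  · obtain ⟨u, i, hui, hle⟩ := h v hv
    exact ⟨.inr (u, i), hui, hle⟩

theorem summable_and_tsum_le_of_tsum_ofReal_le {α : Type*} {f : α → ℝ} (hf : ∀ a, 0 ≤ f a)
    {K : ENNReal} (hK : K ≠ ⊤) (h : ∑' a, ENNReal.ofReal (f a) ≤ K) :
    Summable f ∧ ∑' a, f a ≤ K.toReal := by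
  have hsum : Summable f := by
    simpa only [ENNReal.toReal_ofReal (hf _)] using
      ENNReal.summable_toReal (ne_top_of_le_ne_top hK h)
  exact ⟨hsum, (ENNReal.ofReal_le_iff_le_toReal hK).1
    (by rwa [ENNReal.ofReal_tsum_of_nonneg hf hsum])⟩

end Tsum

section Weight

variable {ι M : Type*} [AddCommMonoid M]

theorem weight_eq_sum_map_toMultiset (f : ι → M) (v : ι →₀ ℕ) :
    Finsupp.weight f v = ((Finsupp.toMultiset v).map f).sum := by
  induction v using Finsupp.induction_linear with
  | zero => simp
  | add u v hu hv => simp [hu, hv]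
  | single i m => simp [Finsupp.weight_single, Multiset.map_nsmul, Multiset.sum_nsmul]

variable [PartialOrder M] [IsOrderedAddMonoid M] {w : ι → M}

theorem weight_nonneg (hw : ∀ i, 0 ≤ w i) (v : ι →₀ ℕ) : 0 ≤ Finsupp.weight w v :=
  Finset.sum_nonneg fun i _ => nsmul_nonneg (hw i) _

theorem nsmul_le_weight (hw : ∀ i, 0 ≤ w i) (v : ι →₀ ℕ) (i : ι) :
    v i • w i ≤ Finsupp.weight w v := by
  by_cases hi : i ∈ v.support
  · exact Finset.single_le_sum (f := fun i => v i • w i) (fun i _ => nsmul_nonneg (hw i) _) hi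
  · rw [Finsupp.notMem_support_iff.1 hi, zero_nsmul]
    exact weight_nonneg hw v

end Weight

section HalfSubadditive

/-- A positive nondecreasing weight `g` for which adding the smaller of two nonnegative numbers to
the larger one costs only half the weight of the smaller. It isolates the properties of
`x ↦ ln^σ⌊x⌋` that make the momentum control the weight of the distinguished mode. -/
structure IsHalfSubadditive (g : ℝ → ℝ) : Prop where
  pos : ∀ x, 0 < g x
  monotone : Monotone g
  add_le : ∀ ⦃x y⦄, 0 ≤ y → y ≤ x → g (x + y) ≤ g x + g y / 2

namespace IsHalfSubadditive

variable {g : ℝ → ℝ}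

theorem add_multiset_sum_le (hg : IsHalfSubadditive g) {b : ℝ} {M : Multiset ℝ}
    (hM : ∀ x ∈ M, 0 ≤ x ∧ x ≤ b) :
    g (b + M.sum) ≤ g b + (M.map g).sum / 2 := by
  induction M using Multiset.induction_on with
  | empty => simp
  | cons x M ih =>
    obtain ⟨⟨hx0, hxb⟩, hM⟩ := Multiset.forall_mem_cons.1 hM
    have hsum : 0 ≤ M.sum := Multiset.sum_nonneg fun y hy => (hM y hy).1
    calc g (b + (x ::ₘ M).sum) = g (b + M.sum + x) := by rw [Multiset.sum_cons]; ring_nf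
      _ ≤ g (b + M.sum) + g x / 2 := hg.add_le hx0 (by linarith)
      _ ≤ g b + (M.map g).sum / 2 + g x / 2 := by gcongr; exact ih hM
      _ = g b + ((x ::ₘ M).map g).sum / 2 := by rw [Multiset.map_cons, Multiset.sum_cons]; ring

-- If `m` is smaller than the maximum `x`, the roles of `m` and `x` are exchanged: `x` becomes the
-- large argument and `m` is one of the small ones.
theorem add_multiset_sum_le_of_isMax (hg : IsHalfSubadditive g) {m x : ℝ} {M : Multiset ℝ}
    (hm : 0 ≤ m) (hx : x ∈ M) (hM : ∀ y ∈ M, 0 ≤ y ∧ y ≤ x) :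
    g (m + M.sum) ≤ g m + ((M.map g).sum + g x) / 2 := by
  have hgx := hg.pos x
  rcases le_total x m with hxm | hmx
  · have := hg.add_multiset_sum_le fun y hy => ⟨(hM y hy).1, (hM y hy).2.trans hxm⟩
    linarith
  · obtain ⟨N, rfl⟩ := Multiset.exists_cons_of_mem hx
    have hN : ∀ y ∈ m ::ₘ N, 0 ≤ y ∧ y ≤ x :=
      Multiset.forall_mem_cons.2 ⟨⟨hm, hmx⟩, (Multiset.forall_mem_cons.1 hM).2⟩
    have hsum := hg.add_multiset_sum_le hN
    have hgm := hg.pos m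
    simp only [Multiset.map_cons, Multiset.sum_cons] at hsum ⊢
    rw [add_left_comm]
    linarith

theorem add_weight_le_of_isMax (hg : IsHalfSubadditive g) {ι : Type*} {s : ι → ℝ}
    (hs : ∀ i, 0 ≤ s i) {m : ℝ} (hm : 0 ≤ m) {v : ι →₀ ℕ} {i : ι}
    (hi : i ∈ v.support) (hmax : ∀ k ∈ v.support, s k ≤ s i) :
    g (m + Finsupp.weight s v) ≤ g m + (Finsupp.weight (g ∘ s) v + g (s i)) / 2 := by
  rw [weight_eq_sum_map_toMultiset, weight_eq_sum_map_toMultiset, ← Multiset.map_map]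
  refine hg.add_multiset_sum_le_of_isMax hm
    (Multiset.mem_map_of_mem s ((Finsupp.mem_toMultiset v i).2 hi)) fun y hy => ?_
  obtain ⟨k, hk, rfl⟩ := Multiset.mem_map.1 hy
  exact ⟨hs k, hmax k ((Finsupp.mem_toMultiset v k).1 hk)⟩

end IsHalfSubadditive

end HalfSubadditive

section LogWeight

/-- The weight `ln^σ⌊x⌋` of a real number, where `⌊x⌋ = max{c, x}`. -/
noncomputable def logWeight (c σ x : ℝ) : ℝ := Real.log (max c x) ^ σ

theorem lnZ_eq_logWeight (c σ : ℝ) (n : ℤ) : lnZ c σ n = logWeight c σ |(n : ℝ)| := rfl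

theorem lnN_natAbs (c σ : ℝ) (n : ℤ) : lnN c σ n.natAbs = lnZ c σ n := by
  rw [lnN, lnZ, Nat.cast_natAbs, Int.cast_abs]

theorem isHalfSubadditive_logWeight {c σ : ℝ} (hc : 1 < c) (hσ : 0 ≤ σ)
    (hsub : ∀ x y : ℝ, c ≤ y → y ≤ x →
      Real.log (x + y) ^ σ ≤ Real.log x ^ σ + (1 / 2) * Real.log y ^ σ) :
    IsHalfSubadditive (logWeight c σ) := by
  have hlog (x : ℝ) : 0 < Real.log (max c x) := Real.log_pos (hc.trans_le (le_max_left c x))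
  have hmono : Monotone (logWeight c σ) := fun x y hxy =>
    Real.rpow_le_rpow (hlog x).le (Real.log_le_log (by positivity) (max_le_max_left c hxy)) hσ
  refine ⟨fun x => Real.rpow_pos_of_pos (hlog x) σ, hmono, fun x y _ hyx => ?_⟩
  have hcx := le_max_left c x
  have hcy := le_max_left c y
  calc logWeight c σ (x + y) ≤ logWeight c σ (max c x + max c y) :=
        hmono (add_le_add (le_max_right c x) (le_max_right c y))
    _ = Real.log (max c x + max c y) ^ σ := by rw [logWeight, max_eq_right (by linarith)]
    _ ≤ logWeight c σ x + (1 / 2) * logWeight c σ y :=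
        hsub _ _ hcy (max_le_max_left c hyx)
    _ = logWeight c σ x + logWeight c σ y / 2 := by ring

theorem eventually_mul_log_le_mul_log_rpow {σ : ℝ} (hσ : 1 < σ) {δ : ℝ} (hδ : 0 < δ) (p : ℝ) :
    ∀ᶠ x in atTop, p * Real.log x ≤ δ * Real.log x ^ σ := by
  have hpow : Tendsto (fun x => δ * Real.log x ^ (σ - 1)) atTop atTop :=
    ((tendsto_rpow_atTop (sub_pos.2 hσ)).comp Real.tendsto_log_atTop).const_mul_atTop hδ
  filter_upwards [hpow.eventually_ge_atTop p, eventually_gt_atTop 1] with x hx h1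
  have hlog := Real.log_pos h1
  calc p * Real.log x ≤ δ * Real.log x ^ (σ - 1) * Real.log x := by gcongr
    _ = δ * Real.log x ^ σ := by rw [mul_assoc, ← Real.rpow_add_one hlog.ne', sub_add_cancel]

theorem summable_exp_neg_mul_logWeight (c : ℝ) {σ : ℝ} (hσ : 1 < σ) {δ : ℝ} (hδ : 0 < δ) :
    Summable fun n : ℤ => Real.exp (-(δ * logWeight c σ |(n : ℝ)|)) := by
  refine Summable.of_norm_bounded_eventually
    (Real.summable_one_div_int_pow.2 (one_lt_two : 1 < 2)) ?_
  have habs : Tendsto (fun n : ℤ => |(n : ℝ)|) cofinite atTop := by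
    simp only [← Int.norm_eq_abs, ← cocompact_eq_cofinite ℤ]
    exact tendsto_norm_cocompact_atTop
  filter_upwards [habs.eventually (eventually_mul_log_le_mul_log_rpow hσ hδ 2),
    habs.eventually_ge_atTop c, habs.eventually_gt_atTop 0] with n hn hcn hn0
  rw [Real.norm_of_nonneg (Real.exp_pos _).le, logWeight, max_eq_right hcn]
  calc Real.exp (-(δ * Real.log |(n : ℝ)| ^ σ)) ≤ Real.exp (-(2 * Real.log |(n : ℝ)|)) := by gcongr
    _ = 1 / (n : ℝ) ^ 2 := by
      rw [Real.exp_neg, mul_comm, Real.exp_mul, Real.exp_log hn0, Real.rpow_two, sq_abs, one_div]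

end LogWeight

section Config

/-- The triples `(a, k, k')` of finitely supported functions `ℤ → ℕ` that index the sum. -/
abbrev Config : Type := (ℤ →₀ ℕ) × (ℤ →₀ ℕ) × (ℤ →₀ ℕ)

/-- The multiplicity `2aₙ + kₙ + k'ₙ` with which each mode `n` occurs in a configuration. -/
noncomputable def occupation (t : Config) : ℤ →₀ ℕ := 2 • t.1 + t.2.1 + t.2.2

/-- The total weight `∑ₙ (2aₙ + kₙ + k'ₙ)·g(|n|)` of a configuration. -/
noncomputable def energy (g : ℝ → ℝ) (t : Config) : ℝ :=
  Finsupp.weight (fun n : ℤ => g |(n : ℝ)|) (occupation t)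

theorem occupation_add (t u : Config) : occupation (t + u) = occupation t + occupation u := by
  simp only [occupation, Prod.fst_add, Prod.snd_add, smul_add]
  abel

theorem occupation_eq_zero_iff {t : Config} : occupation t = 0 ↔ t = 0 := by
  obtain ⟨a, k, k'⟩ := t
  simp [occupation, and_assoc]

theorem energy_add (g : ℝ → ℝ) (t u : Config) : energy g (t + u) = energy g t + energy g u := by
  rw [energy, occupation_add, map_add, energy, energy]

theorem energy_zero (g : ℝ → ℝ) : energy g 0 = 0 := by simp [energy, occupation]

theorem energy_mk (g : ℝ → ℝ) (a k k' : ℤ →₀ ℕ) :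
    energy g (a, k, k') = 2 * Finsupp.weight (fun n : ℤ => g |(n : ℝ)|) a +
      Finsupp.weight (fun n : ℤ => g |(n : ℝ)|) k +
      Finsupp.weight (fun n : ℤ => g |(n : ℝ)|) k' := by
  simp [energy, occupation]

theorem bigSum_eq_energy (c σ : ℝ) (t : Config) :
    bigSum c σ t.1 t.2.1 t.2.2 = energy (logWeight c σ) t := by
  have hsupp : (occupation t).support ⊆ t.1.support ∪ t.2.1.support ∪ t.2.2.support := by
    intro n
    simp only [occupation, Finset.mem_union, Finsupp.mem_support_iff, Finsupp.add_apply,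
      Finsupp.smul_apply, smul_eq_mul]
    lia
  rw [energy, Finsupp.weight_apply, Finsupp.sum_of_support_subset _ hsupp _ (by simp), bigSum]
  exact Finset.sum_congr rfl fun n _ => by simp [occupation, lnZ_eq_logWeight]

theorem momentum_eq_weight_sub (k k' : ℤ →₀ ℕ) :
    momentum k k' = Finsupp.weight id k - Finsupp.weight id k' := by
  rw [Finsupp.weight_apply, Finsupp.weight_apply,
    Finsupp.sum_of_support_subset k Finset.subset_union_left _ (by simp),
    Finsupp.sum_of_support_subset k' Finset.subset_union_right _ (by simp),
    ← Finset.sum_sub_distrib, momentum]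
  exact Finset.sum_congr rfl fun n _ => by simp [sub_mul]

theorem momentum_add (k k' l l' : ℤ →₀ ℕ) :
    momentum (k + l) (k' + l') = momentum k k' + momentum l l' := by
  simp only [momentum_eq_weight_sub, map_add]
  ring

theorem abs_weight_id_le (v : ℤ →₀ ℕ) :
    |((Finsupp.weight id v : ℤ) : ℝ)| ≤ Finsupp.weight (fun n : ℤ => |(n : ℝ)|) v := by
  simp only [Finsupp.weight_apply, Finsupp.sum, Int.cast_sum]
  refine (Finset.abs_sum_le_sum_abs _ _).trans_eq (Finset.sum_congr rfl fun n _ => ?_)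
  simp [abs_mul]

theorem abs_momentum_le (t : Config) :
    |(momentum t.2.1 t.2.2 : ℝ)| ≤ Finsupp.weight (fun n : ℤ => |(n : ℝ)|) (occupation t) := by
  have ha := weight_nonneg (fun n : ℤ => abs_nonneg (n : ℝ)) t.1
  have htri := abs_sub ((Finsupp.weight id t.2.1 : ℤ) : ℝ) ((Finsupp.weight id t.2.2 : ℤ) : ℝ)
  have hk := abs_weight_id_le t.2.1
  have hk' := abs_weight_id_le t.2.2
  rw [momentum_eq_weight_sub, Int.cast_sub, occupation, map_add, map_add, map_nsmul,
    nsmul_eq_mul, Nat.cast_ofNat]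
  linarith

theorem summable_exp_neg_mul_energy {g : ℝ → ℝ} (hpos : ∀ x, 0 < g x)
    (hsum : ∀ δ > 0, Summable fun n : ℤ => Real.exp (-(δ * g |(n : ℝ)|))) {δ : ℝ} (hδ : 0 < δ) :
    Summable fun t : Config => Real.exp (-(δ * energy g t)) := by
  have hweight {δ : ℝ} (hδ : 0 < δ) : Summable fun v : ℤ →₀ ℕ =>
      Real.exp (-(δ * Finsupp.weight (fun n : ℤ => g |(n : ℝ)|) v)) := by
    refine (summable_exp_neg_weight (fun n => mul_pos hδ (hpos _)) (hsum δ hδ)).congr fun v => ?_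
    simp only [Finsupp.weight_apply, Finsupp.mul_sum, mul_smul_comm]
  have hnonneg {β : Type} (h : β → ℝ) : 0 ≤ fun b => Real.exp (h b) := fun b => (Real.exp_pos _).le
  refine ((hweight (mul_pos two_pos hδ)).mul_of_nonneg
    ((hweight hδ).mul_of_nonneg (hweight hδ) (hnonneg _) (hnonneg _)) (hnonneg _)
    fun _ => by positivity).congr fun ⟨a, k, k'⟩ => ?_
  rw [← Real.exp_add, ← Real.exp_add, energy_mk]
  ring_nf

end Config

section Particle

/-- The configuration with a single particle: the summands of `ℤ ⊕ ℤ ⊕ ℤ` stand for the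
components `a`, `k` and `k'`. -/
noncomputable def particle : ℤ ⊕ ℤ ⊕ ℤ → Config :=
  Sum.elim (fun n => (Finsupp.single n 1, 0, 0))
    (Sum.elim (fun n => (0, Finsupp.single n 1, 0)) fun n => (0, 0, Finsupp.single n 1))

/-- The integer mode of a particle. -/
def mode : ℤ ⊕ ℤ ⊕ ℤ → ℤ := Sum.elim id (Sum.elim id id)

/-- The mode whose weight pays for the sum over the removed particle. A particle in `a` has
multiplicity two and pays for itself. One in `k` or `k'` is paid for by the total momentum, which
is `q + n` or `q - n` if the momentum without it is `q`. -/
def payingMode (q : ℤ) : ℤ ⊕ ℤ ⊕ ℤ → ℤ := Sum.elim id (Sum.elim (q + ·) (q - ·))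

theorem energy_particle_inl (g : ℝ → ℝ) (n : ℤ) :
    energy g (particle (.inl n)) = 2 * g |(n : ℝ)| := by
  simp [energy, occupation, particle, Finsupp.weight_single]

theorem energy_particle_inr (g : ℝ → ℝ) (i : ℤ ⊕ ℤ) :
    energy g (particle (.inr i)) = g |(mode (.inr i) : ℝ)| := by
  cases i <;> simp [energy, occupation, particle, mode, Finsupp.weight_single]

theorem particle_apply_le_one (i : ℤ ⊕ ℤ ⊕ ℤ) (j : ℤ) : (particle i).2.1 j ≤ 1 := by
  rcases i with _ | _ | _ <;> simp [particle, Finsupp.single_apply, ite_le_one]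

theorem momentum_add_particle_inr (u : Config) (i : ℤ ⊕ ℤ) (j : ℤ) :
    momentum (u + particle (.inr i)).2.1 (u + particle (.inr i)).2.2 + j =
      payingMode (momentum u.2.1 u.2.2 + j) (.inr i) := by
  rw [Prod.snd_add, Prod.fst_add, Prod.snd_add, momentum_add]
  cases i <;>
    simp only [particle, payingMode, Sum.elim_inl, Sum.elim_inr, momentum_eq_weight_sub,
      Finsupp.weight_single, map_zero, id, one_smul] <;> ring

theorem tsum_comp_payingMode (f : ℤ → ENNReal) (q : ℤ) :
    ∑' i, f (payingMode q i) = 3 * ∑' n, f n := by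
  have hadd : ∑' n, f (q + n) = ∑' n, f n := (Equiv.addLeft q).tsum_eq f
  have hsub : ∑' n, f (q - n) = ∑' n, f n := (Equiv.subLeft q).tsum_eq f
  rw [ENNReal.summable.tsum_sum ENNReal.summable, ENNReal.summable.tsum_sum ENNReal.summable]
  simp only [payingMode, Sum.elim_inl, Sum.elim_inr, id, hadd, hsub]
  ring

theorem exists_add_single_eq {ι : Type*} {v : ι →₀ ℕ} {i : ι} (hi : v i ≠ 0) :
    ∃ u, u + Finsupp.single i 1 = v :=
  ⟨v - Finsupp.single i 1, Finsupp.sub_add_single_one_cancel hi⟩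

theorem exists_add_particle_eq {t : Config} {n : ℤ} (hn : n ∈ (occupation t).support) :
    ∃ u i, u + particle i = t ∧ mode i = n := by
  obtain ⟨a, k, k'⟩ := t
  have hor : a n ≠ 0 ∨ k n ≠ 0 ∨ k' n ≠ 0 := by
    simp only [occupation, Finsupp.mem_support_iff, Finsupp.add_apply, Finsupp.smul_apply,
      smul_eq_mul] at hn
    lia
  rcases hor with h | h | h <;> obtain ⟨u, rfl⟩ := exists_add_single_eq h
  · exact ⟨(u, k, k'), .inl n, by simp [particle], rfl⟩
  · exact ⟨(a, u, k'), .inr (.inl n), by simp [particle], rfl⟩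
  · exact ⟨(a, k, u), .inr (.inr n), by simp [particle], rfl⟩

end Particle

section LargestMode

theorem le_headI_descList {M : Multiset ℕ} {x : ℕ} (hx : x ∈ M) : x ≤ (descList M).headI := by
  have hmem : x ∈ descList M := List.mem_reverse.2 ((M.mem_sort _).2 hx)
  have hsorted : (descList M).Pairwise (· ≥ ·) :=
    List.pairwise_reverse.2 (M.pairwise_sort (· ≤ ·))
  rcases hM : descList M with _ | ⟨y, l⟩
  · simp [hM] at hmem
  · rw [hM] at hmem hsorted
    rcases List.mem_cons.1 hmem with rfl | hxl
    · exact le_rfl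
    · exact List.rel_of_pairwise_cons hsorted hxl

theorem natAbs_le_headI_reps {a k k' : ℤ →₀ ℕ} {j : ℤ} (hj : k j ≠ 0) :
    j.natAbs ≤ (descList (reps a k k')).headI := by
  refine le_headI_descList (Multiset.mem_bind.2 ⟨j, ?_, ?_⟩)
  · simp [hj]
  · exact Multiset.mem_replicate.2 ⟨by lia, rfl⟩

end LargestMode

section ReducedTerm

/-- A majorant of the summand `vectorFieldTerm` at the configuration obtained from `t` by adding
one particle at `j` to `k`, in which `n₁*` has been replaced by `j`; here `α = r - ρ`. -/
noncomputable def reducedTerm (g : ℝ → ℝ) (α μ : ℝ) (j : ℤ) (t : Config) : ℝ :=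
  (1 + t.2.1 j) * Real.exp (-(α * (energy g t - g |(j : ℝ)|) +
    μ * g |((momentum t.2.1 t.2.2 + j : ℤ) : ℝ)|))

theorem vectorFieldTerm_add_particle_le {c σ ρ : ℝ} (hmono : Monotone (logWeight c σ))
    (hρ : 0 ≤ ρ) (r μ : ℝ) (j : ℤ) (t : Config) :
    vectorFieldTerm c σ ρ μ r j (t + particle (.inr (.inl j))) ≤
      reducedTerm (logWeight c σ) (r - ρ) μ j t := by
  obtain ⟨a, k, k'⟩ := t
  set T : Config := (a, k, k') + particle (.inr (.inl j)) with hT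
  have hTj : (T.2.1 j : ℝ) = 1 + k j := by simp [hT, particle, add_comm]
  have hhead : logWeight c σ |(j : ℝ)| ≤ lnN c σ (descList (reps T.1 T.2.1 T.2.2)).headI := by
    rw [← lnZ_eq_logWeight, ← lnN_natAbs]
    exact hmono (Nat.cast_le.2 (natAbs_le_headI_reps (by simp [hT, particle])))
  have henergy : energy (logWeight c σ) T =
      energy (logWeight c σ) (a, k, k') + logWeight c σ |(j : ℝ)| := by
    rw [hT, energy_add, energy_particle_inr]
    rfl
  have hmomentum : momentum T.2.1 T.2.2 = momentum k k' + j := by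
    simpa [hT, payingMode] using momentum_add_particle_inr (a, k, k') (.inl j) 0
  rw [vectorFieldTerm, reducedTerm, hTj, bigSum_eq_energy, henergy, lnN_natAbs, lnZ_eq_logWeight,
    lnZ_eq_logWeight, hmomentum]
  gcongr
  linarith [mul_le_mul_of_nonneg_left hhead hρ]

variable {g : ℝ → ℝ} {α μ δ : ℝ}

theorem reducedTerm_zero_le_one (hg : ∀ x, 0 ≤ g x) (hαμ : α ≤ μ) (j : ℤ) :
    reducedTerm g α μ j 0 ≤ 1 := by
  have hmul := mul_le_mul_of_nonneg_right hαμ (hg |(j : ℝ)|)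
  simp only [reducedTerm, energy_zero, momentum, Prod.fst_zero, Prod.snd_zero, Finsupp.coe_zero,
    Pi.zero_apply, Nat.cast_zero, add_zero, one_mul, Real.exp_le_one_iff, Finsupp.support_zero,
    Finset.empty_union, Finset.sum_empty, zero_add]
  linarith

namespace IsHalfSubadditive

theorem le_add_energy_of_isMax (hg : IsHalfSubadditive g) {t : Config} {n : ℤ}
    (hn : n ∈ (occupation t).support)
    (hmax : ∀ m ∈ (occupation t).support, |(m : ℝ)| ≤ |(n : ℝ)|) (j : ℤ) :
    g |(j : ℝ)| ≤ g |((momentum t.2.1 t.2.2 + j : ℤ) : ℝ)| + (energy g t + g |(n : ℝ)|) / 2 := by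
  have hj : |(j : ℝ)| ≤ |((momentum t.2.1 t.2.2 + j : ℤ) : ℝ)| +
      Finsupp.weight (fun n : ℤ => |(n : ℝ)|) (occupation t) := by
    have htri := abs_sub ((momentum t.2.1 t.2.2 + j : ℤ) : ℝ) (momentum t.2.1 t.2.2)
    rw [Int.cast_add, add_sub_cancel_left, ← Int.cast_add] at htri
    linarith [abs_momentum_le t]
  exact (hg.monotone hj).trans
    (hg.add_weight_le_of_isMax (fun n : ℤ => abs_nonneg (n : ℝ)) (abs_nonneg _) hn hmax)

theorem mul_energy_add_payingMode_le (hg : IsHalfSubadditive g) (hδ : 0 ≤ δ) (hδα : δ ≤ α / 4)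
    (hδμ : δ ≤ μ - α) {u : Config} {i : ℤ ⊕ ℤ ⊕ ℤ}
    (hi : mode i ∈ (occupation (u + particle i)).support)
    (hmax : ∀ m ∈ (occupation (u + particle i)).support, |(m : ℝ)| ≤ |(mode i : ℝ)|) (j : ℤ) :
    2 * δ * energy g u + δ * g |(payingMode (momentum u.2.1 u.2.2 + j) i : ℝ)| ≤
      α * (energy g (u + particle i) - g |(j : ℝ)|) +
        μ * g |((momentum (u + particle i).2.1 (u + particle i).2.2 + j : ℤ) : ℝ)| := by
  have hα : 0 ≤ α := by linarith
  have hkey := mul_le_mul_of_nonneg_left (hg.le_add_energy_of_isMax hi hmax j) hα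
  set p := g |((momentum (u + particle i).2.1 (u + particle i).2.2 + j : ℤ) : ℝ)| with hp
  have hδu : δ * energy g u ≤ α / 4 * energy g u :=
    mul_le_mul_of_nonneg_right hδα (weight_nonneg (fun n => (hg.pos _).le) _)
  have hδp : δ * p ≤ (μ - α) * p := mul_le_mul_of_nonneg_right hδμ (hg.pos _).le
  suffices 2 * δ * energy g u + δ * g |(payingMode (momentum u.2.1 u.2.2 + j) i : ℝ)| ≤
      α / 2 * (energy g (u + particle i) - g |(mode i : ℝ)|) + (μ - α) * p by linarith
  rcases i with n | i
  · have hδn : δ * g |(n : ℝ)| ≤ α / 4 * g |(n : ℝ)| :=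
      mul_le_mul_of_nonneg_right hδα (hg.pos _).le
    have hαn : 0 ≤ α * g |(n : ℝ)| := mul_nonneg hα (hg.pos _).le
    have hp0 : 0 ≤ (μ - α) * p := mul_nonneg (hδ.trans hδμ) (hg.pos _).le
    rw [energy_add, energy_particle_inl]
    simp only [payingMode, mode, Sum.elim_inl, id]
    linarith
  · rw [energy_add, energy_particle_inr, ← momentum_add_particle_inr, ← hp]
    linarith

theorem two_add_apply_le_mul_exp_energy (hg : IsHalfSubadditive g) (hδ : 0 < δ) (u : Config)
    (j : ℤ) :
    2 + (u.2.1 j : ℝ) ≤ (2 + 1 / (δ * g 0)) * Real.exp (δ * energy g u) := by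
  have hg0 := hg.pos 0
  have hj : (u.2.1 j : ℝ) ≤ occupation u j := by
    simp only [occupation, Finsupp.add_apply]
    norm_cast
    lia
  have hcount : u.2.1 j * g 0 ≤ energy g u := calc
    u.2.1 j * g 0 ≤ occupation u j * g |(j : ℝ)| := by
      gcongr
      exact hg.monotone (abs_nonneg _)
    _ ≤ energy g u := by
      rw [← nsmul_eq_mul]
      exact nsmul_le_weight (fun n : ℤ => (hg.pos |(n : ℝ)|).le) (occupation u) j
  have hexp := Real.add_one_le_exp (δ * energy g u)
  have hE : 0 ≤ δ * energy g u := mul_nonneg hδ.le (weight_nonneg (fun n => (hg.pos _).le) _)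
  calc 2 + (u.2.1 j : ℝ) ≤ 2 + energy g u / g 0 := by gcongr; rwa [le_div_iff₀ hg0]
    _ = 2 * 1 + 1 / (δ * g 0) * (δ * energy g u) := by field_simp
    _ ≤ 2 * Real.exp (δ * energy g u) + 1 / (δ * g 0) * Real.exp (δ * energy g u) := by
      gcongr <;> linarith
    _ = (2 + 1 / (δ * g 0)) * Real.exp (δ * energy g u) := by ring

theorem reducedTerm_add_particle_le (hg : IsHalfSubadditive g) (hδ : 0 < δ) (hδα : δ ≤ α / 4)
    (hδμ : δ ≤ μ - α) {u : Config} {i : ℤ ⊕ ℤ ⊕ ℤ}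
    (hi : mode i ∈ (occupation (u + particle i)).support)
    (hmax : ∀ m ∈ (occupation (u + particle i)).support, |(m : ℝ)| ≤ |(mode i : ℝ)|) (j : ℤ) :
    reducedTerm g α μ j (u + particle i) ≤
      (2 + 1 / (δ * g 0)) * Real.exp (-(δ * energy g u)) *
        Real.exp (-(δ * g |(payingMode (momentum u.2.1 u.2.2 + j) i : ℝ)|)) := by
  have hcount : 1 + ((u + particle i).2.1 j : ℝ) ≤ 2 + u.2.1 j := by
    have hone := particle_apply_le_one i j
    simp only [Prod.snd_add, Prod.fst_add, Finsupp.add_apply]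
    norm_cast
    lia
  have hexponent := hg.mul_energy_add_payingMode_le hδ.le hδα hδμ hi hmax j
  set p := g |(payingMode (momentum u.2.1 u.2.2 + j) i : ℝ)|
  calc reducedTerm g α μ j (u + particle i)
      ≤ (2 + u.2.1 j) * Real.exp (-(2 * δ * energy g u + δ * p)) := by
        unfold reducedTerm
        gcongr ?_ * Real.exp (-?_)
    _ ≤ (2 + 1 / (δ * g 0)) * Real.exp (δ * energy g u) *
        Real.exp (-(2 * δ * energy g u + δ * p)) := by
        gcongr
        exact hg.two_add_apply_le_mul_exp_energy hδ u j
    _ = (2 + 1 / (δ * g 0)) * Real.exp (-(δ * energy g u)) * Real.exp (-(δ * p)) := by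
        rw [mul_assoc (_ + _), mul_assoc (_ + _), ← Real.exp_add, ← Real.exp_add]
        ring_nf

theorem exists_add_particle_eq_and_reducedTerm_le (hg : IsHalfSubadditive g) (hδ : 0 < δ)
    (hδα : δ ≤ α / 4) (hδμ : δ ≤ μ - α) (j : ℤ) {t : Config} (ht : t ≠ 0) :
    ∃ u i, u + particle i = t ∧ reducedTerm g α μ j t ≤
      (2 + 1 / (δ * g 0)) * Real.exp (-(δ * energy g u)) *
        Real.exp (-(δ * g |(payingMode (momentum u.2.1 u.2.2 + j) i : ℝ)|)) := by
  obtain ⟨n, hn, hmax⟩ := Finset.exists_max_image (occupation t).support (fun n : ℤ => |(n : ℝ)|)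
    (Finsupp.support_nonempty_iff.2 (occupation_eq_zero_iff.not.2 ht))
  obtain ⟨u, i, rfl, rfl⟩ := exists_add_particle_eq hn
  exact ⟨u, i, rfl, hg.reducedTerm_add_particle_le hδ hδα hδμ hn hmax j⟩

theorem exists_tsum_reducedTerm_le (hg : IsHalfSubadditive g)
    (hsum : ∀ δ > 0, Summable fun n : ℤ => Real.exp (-(δ * g |(n : ℝ)|)))
    (hα : 0 < α) (hαμ : α < μ) :
    ∃ K : ENNReal, K ≠ ⊤ ∧ ∀ j, ∑' t, ENNReal.ofReal (reducedTerm g α μ j t) ≤ K := by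
  obtain ⟨δ, hδ, hδmin⟩ := exists_between (lt_min (div_pos hα four_pos) (sub_pos.2 hαμ))
  obtain ⟨hδα, hδμ⟩ := lt_min_iff.1 hδmin
  let F : Config → ℝ := fun u => (2 + 1 / (δ * g 0)) * Real.exp (-(δ * energy g u))
  let G : ℤ → ℝ := fun n => Real.exp (-(δ * g |(n : ℝ)|))
  have hF : ∀ u, 0 ≤ F u := fun u => by have := hg.pos 0; positivity
  have hFsum : Summable F := (summable_exp_neg_mul_energy hg.pos hsum hδ).mul_left _
  refine ⟨1 + (∑' u, ENNReal.ofReal (F u)) * (3 * ∑' n, ENNReal.ofReal (G n)), ?_, fun j => ?_⟩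
  · exact ENNReal.add_ne_top.2 ⟨ENNReal.one_ne_top, ENNReal.mul_ne_top hFsum.tsum_ofReal_ne_top
      (ENNReal.mul_ne_top (by simp) (hsum δ hδ).tsum_ofReal_ne_top)⟩
  · calc ∑' t, ENNReal.ofReal (reducedTerm g α μ j t)
        ≤ ENNReal.ofReal (reducedTerm g α μ j 0) + ∑' u, ∑' i, ENNReal.ofReal (F u) *
            ENNReal.ofReal (G (payingMode (momentum u.2.1 u.2.2 + j) i)) := by
          refine tsum_le_zero_add_tsum_add particle fun t ht => ?_
          obtain ⟨u, i, hui, hle⟩ :=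
            hg.exists_add_particle_eq_and_reducedTerm_le hδ hδα.le hδμ.le j ht
          exact ⟨u, i, hui, (ENNReal.ofReal_le_ofReal hle).trans_eq (ENNReal.ofReal_mul (hF u))⟩
      _ = ENNReal.ofReal (reducedTerm g α μ j 0) +
            (∑' u, ENNReal.ofReal (F u)) * (3 * ∑' n, ENNReal.ofReal (G n)) := by
          simp only [ENNReal.tsum_mul_left, ENNReal.tsum_mul_right,
            tsum_comp_payingMode fun n => ENNReal.ofReal (G n)]
      _ ≤ 1 + (∑' u, ENNReal.ofReal (F u)) * (3 * ∑' n, ENNReal.ofReal (G n)) := by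
          gcongr
          exact ENNReal.ofReal_le_one.2 (reducedTerm_zero_le_one (fun x => (hg.pos x).le) hαμ.le j)

end IsHalfSubadditive

end ReducedTerm

section VectorField

theorem vectorFieldTerm_nonneg (c σ ρ μ r : ℝ) (j : ℤ) (t : Config) :
    0 ≤ vectorFieldTerm c σ ρ μ r j t := by
  unfold vectorFieldTerm
  positivity

theorem tsum_vectorFieldTerm_le_tsum_reducedTerm {c σ ρ : ℝ} (hmono : Monotone (logWeight c σ))
    (hρ : 0 ≤ ρ) (r μ : ℝ) (j : ℤ) :
    ∑' t : {t : Config // 1 ≤ t.2.1 j}, ENNReal.ofReal (vectorFieldTerm c σ ρ μ r j t) ≤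
      ∑' t, ENNReal.ofReal (reducedTerm (logWeight c σ) (r - ρ) μ j t) := by
  have hmem (t : Config) : 1 ≤ (t + particle (.inr (.inl j))).2.1 j := by simp [particle]
  refine tsum_le_tsum_of_forall_exists (fun t => ⟨t + particle (.inr (.inl j)), hmem t⟩) ?_
  rintro ⟨⟨a, k, k'⟩, hj⟩
  obtain ⟨u, rfl⟩ := exists_add_single_eq (Nat.one_le_iff_ne_zero.1 hj)
  have hadd : (a, u, k') + particle (.inr (.inl j)) = (a, u + Finsupp.single j 1, k') := by
    simp [particle]
  refine ⟨(a, u, k'), Subtype.ext hadd, ENNReal.ofReal_le_ofReal ?_⟩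
  simpa only [hadd] using vectorFieldTerm_add_particle_le hmono hρ r μ j (a, u, k')

end VectorField

theorem full_dim_KAM_stmt15_general (σ ρ r μ : ℝ) (hσ : 1 < σ) (hρ : 0 ≤ ρ) (hr : ρ < r)
    (hμ : r - ρ < μ) (c : ℝ) (hc : 1 < c)
    (hsub : ∀ x y : ℝ, c ≤ y → y ≤ x →
      Real.log (x + y) ^ σ ≤ Real.log x ^ σ + (1 / 2) * Real.log y ^ σ) :
    ∃ C : ℝ, 0 < C ∧ ∀ j : ℤ,
      Summable (fun t : {t : Config // 1 ≤ t.2.1 j} => vectorFieldTerm c σ ρ μ r j t.1) ∧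
      ∑' t : {t : Config // 1 ≤ t.2.1 j}, vectorFieldTerm c σ ρ μ r j t.1 ≤ C := by
  have hg := isHalfSubadditive_logWeight hc (by linarith) hsub
  obtain ⟨K, hK, hle⟩ := hg.exists_tsum_reducedTerm_le
    (fun δ hδ => summable_exp_neg_mul_logWeight c hσ hδ) (sub_pos.2 hr) hμ
  refine ⟨K.toReal + 1, by positivity, fun j => ?_⟩
  have hbound := (tsum_vectorFieldTerm_le_tsum_reducedTerm hg.monotone hρ r μ j).trans (hle j)
  have hnonneg : ∀ t : {t : Config // 1 ≤ t.2.1 j}, 0 ≤ vectorFieldTerm c σ ρ μ r j t.1 :=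
    fun t => vectorFieldTerm_nonneg c σ ρ μ r j t.1
  exact (summable_and_tsum_le_of_tsum_ofReal_le hnonneg hK hbound).imp_right
    fun h => h.trans (lt_add_one _).le

/-- Lemma 2.4 of the paper: the bound on the Hamiltonian vector field.
For `μ > r > 5ρ > 0` there is a constant `C = C(r,ρ,μ,σ) > 0` such that for every `j ∈ ℤ`
the sum over all finitely supported `a, k, k' : ℤ → ℕ` with `kⱼ ≥ 1` of the above summand
converges and is at most `C`. -/
theorem full_dim_KAM_stmt15 (σ ρ r μ : ℝ) (hσ : 2 < σ)
    (hρ : 0 < ρ) (hr : 5 * ρ < r) (hμ : r < μ)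
    (c : ℝ) (hc : Real.exp 1 ≤ c)
    (hsub : ∀ x y : ℝ, c ≤ y → y ≤ x →
      Real.log (x + y) ^ σ ≤ Real.log x ^ σ + (1 / 2) * Real.log y ^ σ) :
    ∃ C : ℝ, 0 < C ∧ ∀ j : ℤ,
      Summable (fun t : {t : (ℤ →₀ ℕ) × (ℤ →₀ ℕ) × (ℤ →₀ ℕ) // 1 ≤ t.2.1 j} =>
        vectorFieldTerm c σ ρ μ r j t.1) ∧
      ∑' t : {t : (ℤ →₀ ℕ) × (ℤ →₀ ℕ) × (ℤ →₀ ℕ) // 1 ≤ t.2.1 j},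
        vectorFieldTerm c σ ρ μ r j t.1 ≤ C :=
  full_dim_KAM_stmt15_general σ ρ r μ (by linarith) hρ.le (by linarith) (by linarith) c
    ((Real.one_lt_exp_iff.2 one_pos).trans_le hc) hsub
end
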